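/- arXiv:2105.05608 — 3 statements merged into one kernel-verified Lean document; each statement's English description precedes it below -/
import Mathlib

section
/- Let E be a real inner product space, let α ∈ (0, π/2], and let s, y₀, y₁ ∈ E be unit vectors with y₀ and y₁ both orthogonal to s. Define x₀ = cos(α)·s + sin(α)·y₀ and x₁ = cos(α)·s + sin(α)·y₁. Then θ(y₀, y₁) ≤ 2·arcsin(1/(2·sin α)) if and only if θ(x₀, x₁) ≤ π/3. -/
open Real
open scoped InnerProductSpace

/-!
On a sphere of radius `r`, vectors at angle `φ` are joined by a chord of length `2 r sin (φ / 2)`,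
so bounding an angle amounts to bounding a chord. The points `cos α • s + sin α • yᵢ` lie on the
unit sphere, and their chord is the chord of the residual vectors `yᵢ` scaled by `sin α`.
-/

section

open InnerProductGeometry

variable {E : Type*} [NormedAddCommGroup E] [InnerProductSpace ℝ E]

theorem norm_sub_eq_two_mul_norm_mul_sin_half_angle {x y : E} (hxy : ‖x‖ = ‖y‖) :
    ‖x - y‖ = 2 * ‖x‖ * sin (angle x y / 2) := by
  have sin_nonneg : 0 ≤ sin (angle x y / 2) :=
    sin_nonneg_of_nonneg_of_le_pi (by linarith [angle_nonneg x y])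
      (by linarith [angle_nonneg x y, angle_le_pi x y])
  have cos_angle_eq : cos (angle x y) = 1 - 2 * sin (angle x y / 2) ^ 2 := by
    rw [sin_sq_eq_half_sub, mul_div_cancel₀ _ two_ne_zero]
    ring
  rw [← sq_eq_sq₀ (norm_nonneg _) (by positivity), sq ‖x - y‖,
    norm_sub_sq_eq_norm_sq_add_norm_sq_sub_two_mul_norm_mul_norm_mul_cos_angle, cos_angle_eq, ← hxy]
  ring

theorem angle_le_two_mul_arcsin_iff_norm_sub_le {x y : E} (hx : x ≠ 0) (hxy : ‖x‖ = ‖y‖) (d : ℝ) :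
    angle x y ≤ 2 * arcsin (d / (2 * ‖x‖)) ↔ ‖x - y‖ ≤ d := by
  have half_angle_mem : angle x y / 2 ∈ Set.Ioc (-(π / 2)) (π / 2) :=
    ⟨by linarith [angle_nonneg x y, pi_pos], by linarith [angle_le_pi x y]⟩
  rw [← div_le_iff₀' two_pos, le_arcsin_iff_sin_le' half_angle_mem, le_div_iff₀' (by positivity),
    norm_sub_eq_two_mul_norm_mul_sin_half_angle hxy]

theorem angle_le_iff_norm_sub_le {x y : E} (hx : x ≠ 0) (hxy : ‖x‖ = ‖y‖)
    {β : ℝ} (hβ0 : 0 ≤ β) (hβ : β ≤ π) :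
    angle x y ≤ β ↔ ‖x - y‖ ≤ 2 * ‖x‖ * sin (β / 2) := by
  rw [← angle_le_two_mul_arcsin_iff_norm_sub_le hx hxy, mul_div_cancel_left₀ _ (by positivity),
    arcsin_sin (by linarith) (by linarith), mul_div_cancel₀ _ two_ne_zero]

theorem norm_cos_smul_add_sin_smul_of_inner_eq_zero {s y : E} (hs : ‖s‖ = 1) (hy : ‖y‖ = 1)
    (hys : ⟪y, s⟫_ℝ = 0) (α : ℝ) : ‖cos α • s + sin α • y‖ = 1 := by
  have horth : ⟪cos α • s, sin α • y⟫_ℝ = 0 := by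
    rw [real_inner_smul_left, real_inner_smul_right, real_inner_comm, hys, mul_zero, mul_zero]
  rw [← sq_eq_sq₀ (norm_nonneg _) zero_le_one, sq,
    norm_add_sq_eq_norm_sq_add_norm_sq_of_inner_eq_zero _ _ horth, norm_smul, norm_smul, hs, hy,
    mul_one, mul_one, norm_eq_abs, norm_eq_abs, abs_mul_abs_self, abs_mul_abs_self, ← sq, ← sq,
    one_pow, cos_sq_add_sin_sq]

theorem stmt_0_general {α : ℝ} (hα0 : 0 < α) (hα : α < π) {β : ℝ} (hβ0 : 0 ≤ β) (hβ : β ≤ π)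
    {s y₀ y₁ : E} (hs : ‖s‖ = 1) (hy₀ : ‖y₀‖ = 1) (hy₁ : ‖y₁‖ = 1)
    (hy₀s : ⟪y₀, s⟫_ℝ = 0) (hy₁s : ⟪y₁, s⟫_ℝ = 0) :
    angle y₀ y₁ ≤ 2 * arcsin (sin (β / 2) / sin α) ↔
      angle (cos α • s + sin α • y₀) (cos α • s + sin α • y₁) ≤ β := by
  have hsin : 0 < sin α := sin_pos_of_pos_of_lt_pi hα0 hα
  have hx₀ := norm_cos_smul_add_sin_smul_of_inner_eq_zero hs hy₀ hy₀s α
  have hx₁ := norm_cos_smul_add_sin_smul_of_inner_eq_zero hs hy₁ hy₁s α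
  have chord_eq : ‖(cos α • s + sin α • y₀) - (cos α • s + sin α • y₁)‖ = sin α * ‖y₀ - y₁‖ := by
    rw [add_sub_add_left_eq_sub, ← smul_sub, norm_smul_of_nonneg hsin.le]
  calc angle y₀ y₁ ≤ 2 * arcsin (sin (β / 2) / sin α)
      ↔ ‖y₀ - y₁‖ ≤ 2 * sin (β / 2) / sin α := by
        rw [← angle_le_two_mul_arcsin_iff_norm_sub_le (ne_zero_of_norm_ne_zero (by simp [hy₀]))
          (hy₀.trans hy₁.symm), hy₀, mul_one, mul_div_assoc, mul_div_cancel_left₀ _ two_ne_zero]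
    _ ↔ ‖(cos α • s + sin α • y₀) - (cos α • s + sin α • y₁)‖ ≤ 2 * sin (β / 2) := by
        rw [chord_eq, le_div_iff₀' hsin]
    _ ↔ angle (cos α • s + sin α • y₀) (cos α • s + sin α • y₁) ≤ β := by
        rw [angle_le_iff_norm_sub_le (ne_zero_of_norm_ne_zero (by simp [hx₀]))
          (hx₀.trans hx₁.symm) hβ0 hβ, hx₀, mul_one]

end

/-- Proposition `theta_star`: for unit vectors `y₀, y₁` orthogonal to the unit vector `s`
(the residual vectors), and `x_i = cos α • s + sin α • y_i` the corresponding points on the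
border of a filter of center `s` and angle `α ∈ (0, π/2]`, the angle between the residual
vectors is at most `θ*_α = 2 arcsin (1/(2 sin α))` iff the angle between `x₀` and `x₁` is at
most `π/3`. -/
theorem stmt_0 {E : Type*} [NormedAddCommGroup E] [InnerProductSpace ℝ E]
    (α : ℝ) (hα0 : 0 < α) (hα : α ≤ π / 2)
    (s y₀ y₁ : E) (hs : ‖s‖ = 1) (hy₀ : ‖y₀‖ = 1) (hy₁ : ‖y₁‖ = 1)
    (hy₀s : ⟪y₀, s⟫_ℝ = 0) (hy₁s : ⟪y₁, s⟫_ℝ = 0)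
    (x₀ x₁ : E)
    (hx₀ : x₀ = cos α • s + sin α • y₀)
    (hx₁ : x₁ = cos α • s + sin α • y₁) :
    InnerProductGeometry.angle y₀ y₁ ≤ 2 * arcsin (1 / (2 * sin α)) ↔
      InnerProductGeometry.angle x₀ x₁ ≤ π / 3 := by
  have sin_half : sin (π / 3 / 2) = 1 / 2 := by rw [div_div, ← sin_pi_div_six]; norm_num
  rw [hx₀, hx₁, ← div_div, ← sin_half]
  exact stmt_0_general hα0 (by linarith) (by positivity) (by linarith [pi_pos]) hs hy₀ hy₁ hy₀s hy₁s
end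

section
/- Let d ≥ 3, let s be a unit vector in ℝ^d, let α ∈ [π/3, π/2], and set θ*_α := 2·arcsin(1/(2·sin α)). Let ν be the rotation-invariant (uniform) probability measure on the sphere S_s := {y ∈ ℝ^d : ‖y‖ = 1 and ⟪y, s⟫ = 0} of unit vectors orthogonal to s. If y₀ and y₁ are independent random vectors each distributed according to ν, and x_i := cos(α)·s + sin(α)·y_i for i = 0, 1, then ℙ[‖x₀ − x₁‖ ≤ 1] = ν{y ∈ S_s : ⟪y, y'⟫ ≥ cos θ*_α} for any fixed y' ∈ S_s. -/
open MeasureTheory ProbabilityTheory Real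
open scoped InnerProductSpace

/-! Since `x₀ - x₁ = sin α • (y₀ - y₁)`, the pair is reducing exactly when the chord from `y₀` to
`y₁` has length at most `1 / sin α`, that is, when `y₁` lies in the cap of angle `θ*_α` around `y₀`.
The isometries fixing `s` act transitively on the unit vectors orthogonal to `s` (a reflection
carries one such vector to another), so the measure of this cap does not depend on its center, and
conditioning on `y₀` gives the claim. -/

theorem measure_preimage_prodMk_eq_of_indepFun {Ω β γ : Type*} [MeasurableSpace Ω]
    [MeasurableSpace β] [MeasurableSpace γ] {P : Measure Ω} [IsProbabilityMeasure P]
    {X : Ω → β} {Y : Ω → γ} (hX : AEMeasurable X P) (hY : AEMeasurable Y P)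
    (hXY : IndepFun X Y P) {S : Set (β × γ)} (hS : MeasurableSet S) {c : ENNReal}
    (hc : ∀ b, P.map Y (Prod.mk b ⁻¹' S) = c) :
    P ((fun ω ↦ (X ω, Y ω)) ⁻¹' S) = c := by
  have := Measure.isProbabilityMeasure_map hX
  rw [← Measure.map_apply_of_aemeasurable (hX.prodMk hY) hS,
    (indepFun_iff_map_prod_eq_prod_map_map hX hY).1 hXY, Measure.prod_apply hS]
  simp only [hc, lintegral_const, measure_univ, mul_one]

theorem one_half_le_sin {x : ℝ} (hx₁ : π / 6 ≤ x) (hx₂ : x ≤ 5 * π / 6) : 1 / 2 ≤ sin x := by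
  rw [← sin_pi_div_six]
  rcases le_total x (π / 2) with hx | hx
  · exact sin_le_sin_of_le_of_le_pi_div_two (by linarith [pi_pos]) hx hx₁
  · rw [← sin_pi_sub x]
    exact sin_le_sin_of_le_of_le_pi_div_two (by linarith [pi_pos]) (by linarith) (by linarith)

section Geometry

variable {E : Type*} [NormedAddCommGroup E] [InnerProductSpace ℝ E]

theorem norm_sub_le_iff_cos_two_mul_arcsin_le_inner {y z : E} (hy : ‖y‖ = 1) (hz : ‖z‖ = 1)
    {r : ℝ} (hr₀ : 0 ≤ r) (hr₂ : r ≤ 2) :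
    ‖y - z‖ ≤ r ↔ cos (2 * arcsin (r / 2)) ≤ ⟪y, z⟫_ℝ := by
  have hcos : cos (2 * arcsin (r / 2)) = 1 - r ^ 2 / 2 := by
    rw [cos_two_mul, cos_sq', sin_arcsin (by linarith) (by linarith)]
    ring
  have hnorm : ‖y - z‖ ^ 2 = 2 - 2 * ⟪y, z⟫_ℝ := by
    rw [norm_sub_sq_real, hy, hz]
    ring
  rw [← sq_le_sq₀ (norm_nonneg _) hr₀, hnorm, hcos]
  constructor <;> intro h <;> linarith

theorem exists_linearIsometryEquiv_apply_eq_of_inner_eq {s y z : E} (hnorm : ‖y‖ = ‖z‖)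
    (hinner : ⟪y, s⟫_ℝ = ⟪z, s⟫_ℝ) : ∃ f : E ≃ₗᵢ[ℝ] E, f s = s ∧ f y = z := by
  refine ⟨(ℝ ∙ (y - z))ᗮ.reflection, ?_, Submodule.reflection_sub hnorm⟩
  apply Submodule.reflection_mem_subspace_eq_self
  rw [Submodule.mem_orthogonal_singleton_iff_inner_right, inner_sub_left, hinner, sub_self]

/-- The point with residual vector `y` on the border of the `α`-filter of center `s`. -/
noncomputable def filterBorderPoint (s : E) (α : ℝ) (y : E) : E :=
  cos α • s + sin α • y

theorem norm_filterBorderPoint_sub (s : E) (α : ℝ) (y z : E) :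
    ‖filterBorderPoint s α y - filterBorderPoint s α z‖ = |sin α| * ‖y - z‖ := by
  rw [filterBorderPoint, filterBorderPoint, add_sub_add_left_eq_sub, ← smul_sub, norm_smul,
    norm_eq_abs]

/-- The sphere of unit vectors orthogonal to `s`: the residual vectors of a filter of center `s`. -/
abbrev OrthogonalSphere (s : E) : Type _ :=
  {y : E // ‖y‖ = 1 ∧ ⟪y, s⟫_ℝ = 0}

namespace OrthogonalSphere

variable {s : E}

/-- The spherical cap of center `z` and angle `θ`, for `θ ∈ [0, π]`: the condition that the angle
between `y` and `z` is at most `θ` is expressed through its cosine. -/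
def cap (z : OrthogonalSphere s) (θ : ℝ) : Set (OrthogonalSphere s) :=
  {y | cos θ ≤ ⟪(y : E), (z : E)⟫_ℝ}

theorem mem_cap {y z : OrthogonalSphere s} {θ : ℝ} :
    y ∈ cap z θ ↔ cos θ ≤ ⟪(y : E), (z : E)⟫_ℝ :=
  Iff.rfl

theorem norm_filterBorderPoint_sub_le_one_iff {α : ℝ} (hα : 1 / 2 ≤ sin α)
    (y z : OrthogonalSphere s) :
    ‖filterBorderPoint s α y - filterBorderPoint s α z‖ ≤ 1 ↔
      z ∈ cap y (2 * arcsin (1 / (2 * sin α))) := by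
  have hpos : 0 < sin α := by linarith
  have hchord : 1 / sin α ≤ 2 := by
    rw [div_le_iff₀ hpos]
    linarith
  have hhalf : 1 / (2 * sin α) = 1 / sin α / 2 := by rw [div_div, mul_comm]
  rw [norm_filterBorderPoint_sub, abs_of_pos hpos, ← le_div_iff₀' hpos,
    norm_sub_le_iff_cos_two_mul_arcsin_le_inner y.2.1 z.2.1 (by positivity) hchord,
    real_inner_comm, ← hhalf, mem_cap]

variable [MeasurableSpace E]

/-- Invariance of a measure on the sphere under the linear isometries of the ambient space that fix
`s`. It is stated through sets of ambient vectors, so that no action of these isometries on the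
sphere has to be introduced. -/
def IsRotationInvariant (ν : Measure (OrthogonalSphere s)) : Prop :=
  ∀ f : E ≃ₗᵢ[ℝ] E, f s = s → ∀ A : Set E, MeasurableSet A →
    ν {y | (y : E) ∈ A} = ν {y | f (y : E) ∈ A}

variable [OpensMeasurableSpace E]

theorem IsRotationInvariant.measure_cap_eq {ν : Measure (OrthogonalSphere s)}
    (hν : IsRotationInvariant ν) (y z : OrthogonalSphere s) (θ : ℝ) :
    ν (cap y θ) = ν (cap z θ) := by
  obtain ⟨f, hfs, hfy⟩ := exists_linearIsometryEquiv_apply_eq_of_inner_eq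
    (y.2.1.trans z.2.1.symm) (y.2.2.trans z.2.2.symm)
  let H : Set E := {w | cos θ ≤ ⟪w, (z : E)⟫_ℝ}
  have hH : MeasurableSet H := (isClosed_le continuous_const (by fun_prop)).measurableSet
  calc ν (cap y θ) = ν {v | f (v : E) ∈ H} := by
        congr 1 with v
        rw [mem_cap, ← f.inner_map_map, hfy]
        rfl
    _ = ν {v | (v : E) ∈ H} := (hν f hfs H hH).symm
    _ = ν (cap z θ) := rfl

theorem measurableSet_setOf_snd_mem_cap_fst [SecondCountableTopology E] (s : E) (θ : ℝ) :
    MeasurableSet {p : OrthogonalSphere s × OrthogonalSphere s | p.2 ∈ cap p.1 θ} :=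
  measurableSet_le measurable_const <|
    (measurable_subtype_coe.comp measurable_snd).inner (𝕜 := ℝ)
      (measurable_subtype_coe.comp measurable_fst)

end OrthogonalSphere

open OrthogonalSphere in
theorem stmt_9_general [MeasurableSpace E] [OpensMeasurableSpace E] [SecondCountableTopology E]
    {s : E} {α : ℝ} (hα : 1 / 2 ≤ sin α)
    {ν : Measure (OrthogonalSphere s)} (hν : IsRotationInvariant ν)
    {Ω : Type*} [MeasurableSpace Ω] {P : Measure Ω} [IsProbabilityMeasure P]
    {Y₀ Y₁ : Ω → OrthogonalSphere s} (hY₀ : AEMeasurable Y₀ P) (hY₁ : HasLaw Y₁ ν P)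
    (hY : IndepFun Y₀ Y₁ P) (y' : OrthogonalSphere s) :
    P {ω | ‖filterBorderPoint s α (Y₀ ω) - filterBorderPoint s α (Y₁ ω)‖ ≤ 1} =
      ν (cap y' (2 * arcsin (1 / (2 * sin α)))) := by
  simp only [norm_filterBorderPoint_sub_le_one_iff hα]
  refine measure_preimage_prodMk_eq_of_indepFun hY₀ hY₁.aemeasurable hY
    (measurableSet_setOf_snd_mem_cap_fst s _) fun y ↦ ?_
  rw [hY₁.map_eq]
  exact hν.measure_cap_eq y y' _

end Geometry

/-- Corollary `delta`: for `d ≥ 3`, a unit vector `s ∈ ℝ^d`, `α ∈ [π/3, π/2]` and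
`θ*_α = 2 arcsin (1/(2 sin α))`, if `y₀, y₁` are independent random unit vectors
orthogonal to `s`, each distributed according to the rotation-invariant probability
measure `ν` on the sphere `S_s` of unit vectors orthogonal to `s`, and
`x_i = cos α • s + sin α • y_i`, then the probability that the pair reduces,
i.e. `‖x₀ - x₁‖ ≤ 1`, equals the relative volume `ν{y : ⟪y, y'⟫ ≥ cos θ*_α}` of a cap
of angle `θ*_α` of `S_s`, for any fixed `y' ∈ S_s`. -/
theorem stmt_9 (d : ℕ) (hd : 3 ≤ d)
    (s : EuclideanSpace ℝ (Fin d)) (hs : ‖s‖ = 1)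
    (α : ℝ) (hα : α ∈ Set.Icc (π / 3) (π / 2))
    (θs : ℝ) (hθs : θs = 2 * arcsin (1 / (2 * sin α)))
    (ν : Measure {y : EuclideanSpace ℝ (Fin d) // ‖y‖ = 1 ∧ ⟪y, s⟫_ℝ = 0})
    [IsProbabilityMeasure ν]
    (hrot : ∀ f : EuclideanSpace ℝ (Fin d) ≃ₗᵢ[ℝ] EuclideanSpace ℝ (Fin d), f s = s →
      ∀ A : Set (EuclideanSpace ℝ (Fin d)), MeasurableSet A →
        ν {y | (y : EuclideanSpace ℝ (Fin d)) ∈ A} =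
          ν {y | f (y : EuclideanSpace ℝ (Fin d)) ∈ A})
    (Ω : Type) [MeasureSpace Ω] [IsProbabilityMeasure (ℙ : Measure Ω)]
    (y₀ y₁ : Ω → {y : EuclideanSpace ℝ (Fin d) // ‖y‖ = 1 ∧ ⟪y, s⟫_ℝ = 0})
    (hm₀ : Measurable y₀) (hm₁ : Measurable y₁) (hind : IndepFun y₀ y₁ ℙ)
    (hd₀ : Measure.map y₀ ℙ = ν) (hd₁ : Measure.map y₁ ℙ = ν)
    (x₀ x₁ : Ω → EuclideanSpace ℝ (Fin d))
    (hx₀ : ∀ ω, x₀ ω = cos α • s + sin α • (y₀ ω : EuclideanSpace ℝ (Fin d)))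
    (hx₁ : ∀ ω, x₁ ω = cos α • s + sin α • (y₁ ω : EuclideanSpace ℝ (Fin d)))
    (y' : {y : EuclideanSpace ℝ (Fin d) // ‖y‖ = 1 ∧ ⟪y, s⟫_ℝ = 0}) :
    ℙ {ω | ‖x₀ ω - x₁ ω‖ ≤ 1} =
      ν {y | cos θs ≤
        ⟪(y : EuclideanSpace ℝ (Fin d)), (y' : EuclideanSpace ℝ (Fin d))⟫_ℝ} := by
  have hsin : 1 / 2 ≤ sin α :=
    one_half_le_sin (by linarith [hα.1, pi_pos]) (by linarith [hα.2, pi_pos])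
  simp only [hx₀, hx₁, hθs]
  exact stmt_9_general hsin hrot hm₀.aemeasurable ⟨hm₁.aemeasurable, hd₁⟩ hind y'
end

section
/- Fix α ∈ (0, π/2) and θ ∈ (0, π) such that 2·cos²(α) < 1 + cos(θ). For each dimension d ≥ 2, let μ_d be the rotation-invariant (uniform) probability measure on the unit sphere S^{d−1} ⊂ ℝ^d, let e₀, e₁ be two fixed orthonormal vectors, and set u = e₀ and w = cos(θ)·e₀ + sin(θ)·e₁ (so θ(u, w) = θ). Let W_d(α, θ) := μ_d{x ∈ S^{d−1} : ⟪x, u⟫ ≥ cos α and ⟪x, w⟫ ≥ cos α} be the relative volume of the wedge H_{u,α} ∩ H_{w,α}. Then (W_d(α, θ))^{1/d} → (1 − 2·cos²(α)/(1 + cos θ))^{1/2} as d → ∞. -/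
open MeasureTheory Real Filter
open scoped InnerProductSpace

/-!
The wedge is squeezed between two caps around the bisector `u + w`. It lies in the half-space
`2 * cos α ≤ ⟪x, u + w⟫`, and it contains the part of a slightly smaller half-space where
`|⟪x, (w - u) / 2⟫| ≤ ε`. Since `w - u ⟂ u + w`, the measure restricted to a half-space with normal
`u + w` is invariant under the isometries fixing `u + w`, so the second moment of a coordinate in
the orthogonal complement is at most `1 / (d - 1)`, and by Markov's inequality the slab keeps half
of the mass as soon as `2 ≤ (d - 1) * ε ^ 2`. Hence wedge and cap have the same exponential rate.

By invariance `μ (cap y)` does not depend on `y`, so integrating it against Lebesgue measure `ν`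
on a shell or a ball and exchanging the integrals gives
`μ (cap p) * ν univ = ∫ ν {y | x ∈ cap y} ∂μ(x)`. For `x` on the sphere and `ρ` the cosine of the
angle of the cap, the points `y` of the unit ball with `x ∈ cap y` and `ρ ^ 2 ≤ ‖y‖` lie in the ball
of radius `√(1 - ρ ^ 2)` around `ρ • x`. Conversely half of a ball of almost that radius consists of
such points, up to a small dilation of the unit ball; this is the slab estimate again, now for
Lebesgue measure on the ball. The rate of the cap is therefore `√(1 - ρ ^ 2)`, with
`ρ = 2 * cos α / ‖u + w‖` for the wedge.
-/

open Module Metric Topology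

section SecondMoment

variable {E : Type*} [NormedAddCommGroup E] [InnerProductSpace ℝ E] [MeasurableSpace E]
  [BorelSpace E] {m : Measure E} {K : Submodule ℝ E}

lemma integral_inner_sq_eq_of_norm_eq
    (hm : ∀ f : E ≃ₗᵢ[ℝ] E, (∀ x ∈ Kᗮ, f x = x) → MeasurePreserving f m m)
    {y z : E} (hy : y ∈ K) (hz : z ∈ K) (hyz : ‖y‖ = ‖z‖) :
    ∫ x, ⟪x, y⟫_ℝ ^ 2 ∂m = ∫ x, ⟪x, z⟫_ℝ ^ 2 ∂m := by
  set f : E ≃ₗᵢ[ℝ] E := (ℝ ∙ (y - z))ᗮ.reflection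
  have hf_fix : ∀ x ∈ Kᗮ, f x = x := fun x hx ↦
    Submodule.reflection_mem_subspace_eq_self <|
      Submodule.orthogonal_le ((Submodule.span_singleton_le_iff_mem _ _).2 (K.sub_mem hy hz)) hx
  have hfy : f y = z := Submodule.reflection_sub hyz
  calc ∫ x, ⟪x, y⟫_ℝ ^ 2 ∂m = ∫ x, ⟪f x, z⟫_ℝ ^ 2 ∂m := by
        simp only [← hfy, LinearIsometryEquiv.inner_map_map]
    _ = ∫ x, ⟪x, z⟫_ℝ ^ 2 ∂m :=
        (hm f hf_fix).integral_comp f.toHomeomorph.measurableEmbedding fun x ↦ ⟪x, z⟫_ℝ ^ 2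

lemma integrable_inner_sq (hm : Integrable (fun x ↦ ‖x‖ ^ 2) m) (z : E) :
    Integrable (fun x ↦ ⟪x, z⟫_ℝ ^ 2) m := by
  refine (hm.mul_const (‖z‖ ^ 2)).mono' (by fun_prop) (.of_forall fun x ↦ ?_)
  rw [norm_pow, ← mul_pow]
  gcongr
  exact norm_inner_le_norm x z

lemma finrank_mul_integral_inner_sq_le [FiniteDimensional ℝ K]
    (hm : ∀ f : E ≃ₗᵢ[ℝ] E, (∀ x ∈ Kᗮ, f x = x) → MeasurePreserving f m m)
    (hint : Integrable (fun x ↦ ‖x‖ ^ 2) m) {z : E} (hz : z ∈ K) :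
    finrank ℝ K * ∫ x, ⟪x, z⟫_ℝ ^ 2 ∂m ≤ ‖z‖ ^ 2 * ∫ x, ‖x‖ ^ 2 ∂m := by
  set b := stdOrthonormalBasis ℝ K
  have hb : Orthonormal ℝ fun i ↦ (b i : E) := b.orthonormal.comp_linearIsometry K.subtypeₗᵢ
  have h_coord (i) : ∫ x, ⟪x, z⟫_ℝ ^ 2 ∂m = ‖z‖ ^ 2 * ∫ x, ⟪x, b i⟫_ℝ ^ 2 ∂m := by
    rw [integral_inner_sq_eq_of_norm_eq hm hz (K.smul_mem ‖z‖ (b i).2)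
      (by simp [norm_smul, hb.1 i])]
    simp only [real_inner_smul_right, mul_pow, integral_const_mul]
  calc finrank ℝ K * ∫ x, ⟪x, z⟫_ℝ ^ 2 ∂m
      = ∑ i, ‖z‖ ^ 2 * ∫ x, ⟪x, b i⟫_ℝ ^ 2 ∂m := by simp [← h_coord]
    _ = ‖z‖ ^ 2 * ∫ x, ∑ i, ⟪x, b i⟫_ℝ ^ 2 ∂m := by
        rw [integral_finsetSum _ fun i _ ↦ integrable_inner_sq hint _, Finset.mul_sum]
    _ ≤ ‖z‖ ^ 2 * ∫ x, ‖x‖ ^ 2 ∂m := by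
        refine mul_le_mul_of_nonneg_left (integral_mono ?_ hint fun x ↦ ?_) (sq_nonneg _)
        · exact integrable_finsetSum _ fun i _ ↦ integrable_inner_sq hint _
        · simpa [real_inner_comm] using hb.sum_inner_products_le x (s := Finset.univ)

lemma measureReal_univ_le_two_mul_measureReal_slab [FiniteDimensional ℝ K] [IsFiniteMeasure m]
    (hm : ∀ f : E ≃ₗᵢ[ℝ] E, (∀ x ∈ Kᗮ, f x = x) → MeasurePreserving f m m)
    (hball : ∀ᵐ x ∂m, ‖x‖ ≤ 1) {z : E} (hz : z ∈ K) (hz1 : ‖z‖ ≤ 1) {δ : ℝ} (hδ : 0 ≤ δ)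
    (hK : 2 ≤ finrank ℝ K * δ ^ 2) :
    m.real Set.univ ≤ 2 * m.real {x | |⟪x, z⟫_ℝ| ≤ δ} := by
  have h_sq : ∀ᵐ x ∂m, ‖x‖ ^ 2 ≤ 1 := hball.mono fun x hx ↦ pow_le_one₀ (norm_nonneg x) hx
  have hint : Integrable (fun x ↦ ‖x‖ ^ 2) m :=
    .of_bound (by fun_prop) 1 (by simpa using h_sq)
  have h_mass : ∫ x, ‖x‖ ^ 2 ∂m ≤ m.real Set.univ := by
    simpa using integral_mono_ae hint (integrable_const 1) h_sq
  have h_markov : δ ^ 2 * m.real {x | |⟪x, z⟫_ℝ| ≤ δ}ᶜ ≤ ∫ x, ⟪x, z⟫_ℝ ^ 2 ∂m := by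
    refine le_trans ?_ (mul_meas_ge_le_integral_of_nonneg (.of_forall fun x ↦ sq_nonneg _)
      (integrable_inner_sq hint z) (δ ^ 2))
    refine mul_le_mul_of_nonneg_left (measureReal_mono fun x hx ↦ ?_) (sq_nonneg δ)
    rw [Set.mem_compl_iff, Set.mem_ofPred_eq, not_le] at hx
    rw [Set.mem_ofPred_eq, ← sq_abs ⟪x, z⟫_ℝ]
    gcongr
  have h_outside : 2 * m.real {x | |⟪x, z⟫_ℝ| ≤ δ}ᶜ ≤ m.real Set.univ :=
    calc 2 * m.real {x | |⟪x, z⟫_ℝ| ≤ δ}ᶜ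
        ≤ finrank ℝ K * δ ^ 2 * m.real {x | |⟪x, z⟫_ℝ| ≤ δ}ᶜ := by gcongr
      _ ≤ finrank ℝ K * ∫ x, ⟪x, z⟫_ℝ ^ 2 ∂m := by rw [mul_assoc]; gcongr
      _ ≤ ‖z‖ ^ 2 * ∫ x, ‖x‖ ^ 2 ∂m := finrank_mul_integral_inner_sq_le hm hint hz
      _ ≤ 1 * m.real Set.univ := by gcongr; exact pow_le_one₀ (norm_nonneg z) hz1
      _ = m.real Set.univ := one_mul _
  have h_split := measureReal_add_measureReal_compl (μ := m)
    (measurableSet_le (by fun_prop) measurable_const : MeasurableSet {x | |⟪x, z⟫_ℝ| ≤ δ})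
  linarith

end SecondMoment

section HalfSpace

variable {E : Type*} [NormedAddCommGroup E] [InnerProductSpace ℝ E]

/-- The half-space that cuts out of the unit sphere the cap of points within angle `arccos ρ` of
the direction of `p`; taking the whole half-space instead of its trace on the sphere lets all
measures live on `E`. For `p = 0` it is all of `E`. -/
def halfSpace (p : E) (ρ : ℝ) : Set E := {x | ρ * ‖p‖ ≤ ⟪x, p⟫_ℝ}

lemma preimage_halfSpace (f : E ≃ₗᵢ[ℝ] E) (p : E) (ρ : ℝ) :
    f ⁻¹' halfSpace (f p) ρ = halfSpace p ρ := by
  simp [halfSpace]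

lemma halfSpace_smul {r : ℝ} (hr : 0 < r) (p : E) (ρ : ℝ) :
    halfSpace (r • p) ρ = halfSpace p ρ := by
  ext x
  simp only [halfSpace, norm_smul, norm_of_nonneg hr.le, real_inner_smul_right, Set.mem_ofPred_eq,
    mul_left_comm ρ r, mul_le_mul_iff_right₀ hr]

variable [MeasurableSpace E] [BorelSpace E]

lemma measurableSet_halfSpace (p : E) (ρ : ℝ) : MeasurableSet (halfSpace p ρ) :=
  measurableSet_le measurable_const (by fun_prop)

variable {m : Measure E}

lemma measure_halfSpace_congr (hm : ∀ f : E ≃ₗᵢ[ℝ] E, MeasurePreserving f m m) {p q : E}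
    (hp : p ≠ 0) (hq : q ≠ 0) (ρ : ℝ) : m (halfSpace p ρ) = m (halfSpace q ρ) := by
  set f : E ≃ₗᵢ[ℝ] E := (ℝ ∙ (‖q‖ • p - ‖p‖ • q))ᗮ.reflection
  have hf : f (‖q‖ • p) = ‖p‖ • q :=
    Submodule.reflection_sub (by simp [norm_smul, mul_comm])
  rw [← halfSpace_smul (norm_pos_iff.2 hq) p, ← preimage_halfSpace f, hf,
    halfSpace_smul (norm_pos_iff.2 hp),
    (hm f).measure_preimage (measurableSet_halfSpace q ρ).nullMeasurableSet]

variable [SecondCountableTopology E]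

lemma measurableSet_setOf_mem_halfSpace (ρ : ℝ) :
    MeasurableSet {q : E × E | q.1 ∈ halfSpace q.2 ρ} :=
  measurableSet_le (f := fun q : E × E ↦ ρ * ‖q.2‖) (by fun_prop) (by fun_prop)

lemma lintegral_measure_setOf_mem_halfSpace [SFinite m]
    (hm : ∀ f : E ≃ₗᵢ[ℝ] E, MeasurePreserving f m m) {p : E} (hp : p ≠ 0) (ρ : ℝ) (ν : Measure E)
    [SFinite ν] (hν : ∀ᵐ y ∂ν, y ≠ 0) :
    ∫⁻ x, ν {y | x ∈ halfSpace y ρ} ∂m = m (halfSpace p ρ) * ν Set.univ := by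
  have hS := measurableSet_setOf_mem_halfSpace (E := E) ρ
  calc ∫⁻ x, ν {y | x ∈ halfSpace y ρ} ∂m = ∫⁻ y, m (halfSpace y ρ) ∂ν :=
        (Measure.prod_apply hS).symm.trans (Measure.prod_apply_symm hS)
    _ = ∫⁻ _, m (halfSpace p ρ) ∂ν :=
        lintegral_congr_ae (hν.mono fun y hy ↦ measure_halfSpace_congr hm hy hp ρ)
    _ = m (halfSpace p ρ) * ν Set.univ := lintegral_const _

lemma integral_measureReal_setOf_mem_halfSpace [SFinite m]
    (hm : ∀ f : E ≃ₗᵢ[ℝ] E, MeasurePreserving f m m) {p : E} (hp : p ≠ 0) (ρ : ℝ) (ν : Measure E)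
    [IsFiniteMeasure ν] (hν : ∀ᵐ y ∂ν, y ≠ 0) :
    ∫ x, ν.real {y | x ∈ halfSpace y ρ} ∂m = m.real (halfSpace p ρ) * ν.real Set.univ := by
  have h_meas : Measurable fun x ↦ ν {y | x ∈ halfSpace y ρ} :=
    measurable_measure_prodMk_left (measurableSet_setOf_mem_halfSpace ρ)
  simp only [measureReal_def]
  rw [integral_toReal h_meas.aemeasurable (.of_forall fun x ↦ measure_lt_top ν _),
    lintegral_measure_setOf_mem_halfSpace hm hp ρ ν hν, ENNReal.toReal_mul]

lemma integrable_measureReal_setOf_mem_halfSpace [IsFiniteMeasure m] (ρ : ℝ) (ν : Measure E)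
    [IsFiniteMeasure ν] : Integrable (fun x ↦ ν.real {y | x ∈ halfSpace y ρ}) m :=
  Measure.integrable_measure_prodMk_left (measurableSet_setOf_mem_halfSpace ρ) (measure_ne_top _ _)

end HalfSpace

section Geometry

variable {E : Type*} [NormedAddCommGroup E] [InnerProductSpace ℝ E]

lemma mem_closedBall_of_mem_halfSpace {x y : E} {ρ : ℝ} (hx : ‖x‖ = 1) (hρ : 0 ≤ ρ)
    (hxy : x ∈ halfSpace y ρ) (hy : ρ ^ 2 ≤ ‖y‖) (hy1 : ‖y‖ ≤ 1) :
    y ∈ closedBall (ρ • x) √(1 - ρ ^ 2) := by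
  have hxy : ρ * ‖y‖ ≤ ⟪x, y⟫_ℝ := hxy
  rw [mem_closedBall_iff_norm]
  refine le_sqrt_of_sq_le ?_
  calc ‖y - ρ • x‖ ^ 2 = ‖y‖ ^ 2 - 2 * ρ * ⟪x, y⟫_ℝ + ρ ^ 2 := by
        rw [norm_sub_sq_real, real_inner_smul_right, real_inner_comm, norm_smul, hx,
          norm_of_nonneg hρ]
        ring
    _ ≤ ‖y‖ ^ 2 - 2 * ρ * (ρ * ‖y‖) + ρ ^ 2 := by gcongr
    _ = 1 - ρ ^ 2 - (1 - ‖y‖) * (1 + ‖y‖ - 2 * ρ ^ 2) := by ring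
    _ ≤ 1 - ρ ^ 2 :=
        sub_le_self _ (mul_nonneg (sub_nonneg.2 hy1) (by linarith))

lemma norm_smul_add_le {x z : E} {r η : ℝ} (hx : ‖x‖ = 1) (hr : 0 ≤ r) (hr1 : r ≤ 1)
    (hη : 0 ≤ η) (hz : ‖z‖ ≤ √(1 - r ^ 2)) (hxz : ⟪z, x⟫_ℝ ≤ η) : ‖r • x + z‖ ≤ 1 + η := by
  refine le_of_sq_le_sq ?_ (by positivity)
  calc ‖r • x + z‖ ^ 2 = r ^ 2 + 2 * (r * ⟪z, x⟫_ℝ) + ‖z‖ ^ 2 := by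
        rw [norm_add_sq_real, real_inner_smul_left, real_inner_comm, norm_smul, hx,
          norm_of_nonneg hr]
        ring
    _ ≤ r ^ 2 + 2 * (r * η) + ‖z‖ ^ 2 := by gcongr
    _ ≤ r ^ 2 + 2 * (1 * η) + √(1 - r ^ 2) ^ 2 := by gcongr
    _ = 1 + 2 * η := by rw [sq_sqrt (by nlinarith)]; ring
    _ ≤ (1 + η) ^ 2 := by nlinarith

lemma mem_halfSpace_smul_add {x z : E} {ρ η : ℝ} (hx : ‖x‖ = 1) (hρ : 0 ≤ ρ) (hη : 0 ≤ η)
    (hρη : ρ + 2 * η ≤ 1) (hz : ‖z‖ ≤ √(1 - (ρ + 2 * η) ^ 2)) (hxz : |⟪z, x⟫_ℝ| ≤ η) :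
    x ∈ halfSpace ((ρ + 2 * η) • x + z) ρ := by
  obtain ⟨h_lower, h_upper⟩ := abs_le.1 hxz
  calc ρ * ‖(ρ + 2 * η) • x + z‖ ≤ ρ * (1 + η) := by
        gcongr
        exact norm_smul_add_le hx (by positivity) hρη hη hz h_upper
    _ ≤ ρ + 2 * η - η := by nlinarith
    _ ≤ ρ + 2 * η + ⟪z, x⟫_ℝ := by linarith
    _ = ⟪x, (ρ + 2 * η) • x + z⟫_ℝ := by
        rw [inner_add_right, real_inner_smul_right, real_inner_self_eq_norm_sq, hx,
          real_inner_comm]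
        ring

end Geometry

section Wedge

variable {E : Type*} [NormedAddCommGroup E] [InnerProductSpace ℝ E]

/-- The intersection of two half-spaces: for unit vectors `u`, `w` and `b = cos α`, its trace on the
unit sphere is the wedge `H_{u,α} ∩ H_{w,α}` of two caps of angle `α`. -/
def wedge (u w : E) (b : ℝ) : Set E := {x | b ≤ ⟪x, u⟫_ℝ ∧ b ≤ ⟪x, w⟫_ℝ}

lemma wedge_subset_halfSpace_add (u w : E) {b ρ : ℝ} (hb : ρ * ‖u + w‖ = 2 * b) :
    wedge u w b ⊆ halfSpace (u + w) ρ := by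
  rintro x ⟨hu, hw⟩
  rw [halfSpace, Set.mem_ofPred_eq, inner_add_right]
  linarith

lemma halfSpace_add_inter_slab_subset_wedge (u w : E) {b ρ ε : ℝ}
    (hb : ρ * ‖u + w‖ = 2 * b + 2 * ε) :
    halfSpace (u + w) ρ ∩ {x | |⟪x, (2⁻¹ : ℝ) • (w - u)⟫_ℝ| ≤ ε} ⊆ wedge u w b := by
  rintro x ⟨h_half, hslab⟩
  rw [halfSpace, Set.mem_ofPred_eq, inner_add_right] at h_half
  rw [Set.mem_ofPred_eq, real_inner_smul_right, inner_sub_right, abs_le] at hslab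
  constructor <;> linarith

end Wedge

lemma measureReal_map_sphere_coe {E : Type*} [SeminormedAddCommGroup E] [MeasurableSpace E]
    [OpensMeasurableSpace E] (μ : Measure (sphere (0 : E) 1)) (A : Set E) :
    (μ.map (↑)).real A = μ.real {x | (x : E) ∈ A} := by
  rw [measureReal_def, (MeasurableEmbedding.subtype_coe isClosed_sphere.measurableSet).map_apply]
  rfl

section Uniform

variable {E : Type*} [NormedAddCommGroup E] [InnerProductSpace ℝ E] [MeasurableSpace E]

/-- A rotation-invariant probability measure on the unit sphere of `E`, encoded as a measure on the
ambient space `E` that is carried by the sphere and preserved by all linear isometries. -/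
structure IsUniformOnSphere (m : Measure E) : Prop extends IsProbabilityMeasure m where
  measurePreserving (f : E ≃ₗᵢ[ℝ] E) : MeasurePreserving f m m
  norm_eq_one : ∀ᵐ x ∂m, ‖x‖ = 1

variable [BorelSpace E]

lemma isUniformOnSphere_map_coe {μ : Measure (sphere (0 : E) 1)} (hprob : IsProbabilityMeasure μ)
    (hrot : ∀ f : E ≃ₗᵢ[ℝ] E, ∀ A : Set E, MeasurableSet A →
      μ {x | (x : E) ∈ A} = μ {x | f (x : E) ∈ A}) :
    IsUniformOnSphere (μ.map ((↑) : sphere (0 : E) 1 → E)) where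
  toIsProbabilityMeasure := Measure.isProbabilityMeasure_map measurable_subtype_coe.aemeasurable
  measurePreserving f := by
    refine ⟨f.continuous.measurable, Measure.ext fun A hA ↦ ?_⟩
    have hfA : MeasurableSet (f ⁻¹' A) := f.continuous.measurable hA
    rw [Measure.map_apply f.continuous.measurable hA, Measure.map_apply measurable_subtype_coe hA,
      Measure.map_apply measurable_subtype_coe hfA]
    exact (hrot f A hA).symm
  norm_eq_one := by
    rw [ae_map_iff measurable_subtype_coe.aemeasurable
      (measurableSet_eq_fun measurable_norm measurable_const)]
    exact .of_forall norm_eq_of_mem_sphere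

end Uniform

section Bounds

variable {E : Type*} [NormedAddCommGroup E] [InnerProductSpace ℝ E] [FiniteDimensional ℝ E]
  [MeasurableSpace E] [BorelSpace E]

lemma measureReal_closedBall_zero_one_pos : 0 < volume.real (closedBall (0 : E) 1) :=
  ENNReal.toReal_pos (measure_closedBall_pos _ _ one_pos).ne' measure_closedBall_lt_top.ne

lemma measureReal_closedBall_one_sdiff_closedBall {r : ℝ} (hr : 0 ≤ r) (hr1 : r ≤ 1) :
    volume.real (closedBall (0 : E) 1 \ closedBall 0 r) =
      (1 - r ^ finrank ℝ E) * volume.real (closedBall (0 : E) 1) := by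
  rw [measureReal_sdiff (closedBall_subset_closedBall hr1) measurableSet_closedBall
    measure_closedBall_lt_top.ne, Measure.addHaar_real_closedBall' volume 0 hr]
  ring

lemma measureReal_closedBall_le_two_mul_inter_slab {x : E} (hx : ‖x‖ ≤ 1) {R δ : ℝ}
    (hR : R ≤ 1) (hδ : 0 ≤ δ) (hdim : 2 ≤ finrank ℝ E * δ ^ 2) :
    volume.real (closedBall (0 : E) R) ≤
      2 * volume.real (closedBall (0 : E) R ∩ {z | |⟪z, x⟫_ℝ| ≤ δ}) := by
  have : IsFiniteMeasure ((volume : Measure E).restrict (closedBall 0 R)) :=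
    isFiniteMeasure_restrict.2 measure_closedBall_lt_top.ne
  have h_inv (f : E ≃ₗᵢ[ℝ] E) : MeasurePreserving f (volume.restrict (closedBall 0 R))
      (volume.restrict (closedBall 0 R)) := by
    simpa using f.measurePreserving.restrict_preimage (s := closedBall 0 R) measurableSet_closedBall
  have h_norm : ∀ᵐ y ∂(volume : Measure E).restrict (closedBall 0 R), ‖y‖ ≤ 1 :=
    (ae_restrict_mem measurableSet_closedBall).mono fun y hy ↦
      (mem_closedBall_zero_iff.1 hy).trans hR
  have h := measureReal_univ_le_two_mul_measureReal_slab (K := ⊤) (fun f _ ↦ h_inv f) h_norm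
    Submodule.mem_top hx hδ (by rwa [finrank_top])
  rwa [measureReal_restrict_apply_univ, measureReal_restrict_apply' measurableSet_closedBall,
    Set.inter_comm] at h

namespace IsUniformOnSphere

variable {m : Measure E} (hm : IsUniformOnSphere m)
include hm

lemma measureReal_halfSpace_mul_le {p : E} (hp : p ≠ 0) (ρ : ℝ) {ν : Measure E} [IsFiniteMeasure ν]
    (hν : ∀ᵐ y ∂ν, y ≠ 0) {C : ℝ} (hC : ∀ x, ‖x‖ = 1 → ν.real {y | x ∈ halfSpace y ρ} ≤ C) :
    m.real (halfSpace p ρ) * ν.real Set.univ ≤ C := by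
  have := hm.toIsProbabilityMeasure
  rw [← integral_measureReal_setOf_mem_halfSpace hm.measurePreserving hp ρ ν hν]
  simpa using integral_mono_ae (integrable_measureReal_setOf_mem_halfSpace ρ ν) (integrable_const C)
    (hm.norm_eq_one.mono hC)

lemma le_measureReal_halfSpace_mul {p : E} (hp : p ≠ 0) (ρ : ℝ) {ν : Measure E} [IsFiniteMeasure ν]
    (hν : ∀ᵐ y ∂ν, y ≠ 0) {C : ℝ} (hC : ∀ x, ‖x‖ = 1 → C ≤ ν.real {y | x ∈ halfSpace y ρ}) :
    C ≤ m.real (halfSpace p ρ) * ν.real Set.univ := by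
  have := hm.toIsProbabilityMeasure
  rw [← integral_measureReal_setOf_mem_halfSpace hm.measurePreserving hp ρ ν hν]
  simpa using integral_mono_ae (integrable_const C) (integrable_measureReal_setOf_mem_halfSpace ρ ν)
    (hm.norm_eq_one.mono hC)

lemma measureReal_halfSpace_le {p : E} (hp : p ≠ 0) {ρ : ℝ} (hρ : 0 ≤ ρ) (hρ1 : ρ < 1) :
    m.real (halfSpace p ρ) ≤ (1 - ρ ^ 2)⁻¹ * √(1 - ρ ^ 2) ^ finrank ℝ E := by
  have : Nontrivial E := ⟨p, 0, hp⟩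
  have hρ_sq : ρ ^ 2 < 1 := pow_lt_one₀ hρ hρ1 two_ne_zero
  set V := volume.real (closedBall (0 : E) 1)
  set shell : Set E := closedBall 0 1 \ closedBall 0 (ρ ^ 2)
  have h_shell : MeasurableSet shell := measurableSet_closedBall.diff measurableSet_closedBall
  have : IsFiniteMeasure ((volume : Measure E).restrict shell) := isFiniteMeasure_restrict.2 <|
    measure_ne_top_of_subset Set.sdiff_subset measure_closedBall_lt_top.ne
  have h_halfSpace (x : E) (hx : ‖x‖ = 1) :
      (volume.restrict shell).real {y | x ∈ halfSpace y ρ} ≤ √(1 - ρ ^ 2) ^ finrank ℝ E * V := by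
    rw [← Measure.addHaar_real_closedBall' volume (ρ • x) (sqrt_nonneg _),
      measureReal_restrict_apply' h_shell]
    refine measureReal_mono ?_ measure_closedBall_lt_top.ne
    rintro y ⟨hxy, hy1, hy⟩
    rw [mem_closedBall_zero_iff] at hy1 hy
    exact mem_closedBall_of_mem_halfSpace hx hρ hxy (not_le.1 hy).le hy1
  have h := hm.measureReal_halfSpace_mul_le hp ρ (Measure.ae_ne _ 0) h_halfSpace
  rw [measureReal_restrict_apply_univ,
    measureReal_closedBall_one_sdiff_closedBall (sq_nonneg ρ) hρ_sq.le, ← mul_assoc] at h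
  have h_shell_le : 1 - ρ ^ 2 ≤ 1 - (ρ ^ 2) ^ finrank ℝ E :=
    sub_le_sub_left (pow_le_of_le_one (sq_nonneg ρ) hρ_sq.le finrank_pos.ne') 1
  rw [inv_mul_eq_div, le_div_iff₀ (sub_pos.2 hρ_sq)]
  calc m.real (halfSpace p ρ) * (1 - ρ ^ 2)
      ≤ m.real (halfSpace p ρ) * (1 - (ρ ^ 2) ^ finrank ℝ E) := by gcongr
    _ ≤ √(1 - ρ ^ 2) ^ finrank ℝ E :=
        le_of_mul_le_mul_right h measureReal_closedBall_zero_one_pos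

lemma le_measureReal_halfSpace {p : E} (hp : p ≠ 0) {ρ η : ℝ} (hρ : 0 ≤ ρ) (hη : 0 ≤ η)
    (hρη : ρ + 2 * η ≤ 1) (hdim : 2 ≤ finrank ℝ E * η ^ 2) :
    1 / 2 * (√(1 - (ρ + 2 * η) ^ 2) / (1 + η)) ^ finrank ℝ E ≤ m.real (halfSpace p ρ) := by
  have : Nontrivial E := ⟨p, 0, hp⟩
  set V := volume.real (closedBall (0 : E) 1)
  set R := √(1 - (ρ + 2 * η) ^ 2)
  set ν : Measure E := volume.restrict (closedBall 0 (1 + η))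
  have : IsFiniteMeasure ν := isFiniteMeasure_restrict.2 measure_closedBall_lt_top.ne
  have h_halfSpace (x : E) (hx : ‖x‖ = 1) :
      1 / 2 * (R ^ finrank ℝ E * V) ≤ ν.real {y | x ∈ halfSpace y ρ} :=
    calc 1 / 2 * (R ^ finrank ℝ E * V) = 1 / 2 * volume.real (closedBall (0 : E) R) := by
          rw [Measure.addHaar_real_closedBall' volume 0 (sqrt_nonneg _)]
      _ ≤ volume.real (closedBall (0 : E) R ∩ {z | |⟪z, x⟫_ℝ| ≤ η}) := by
          linarith [measureReal_closedBall_le_two_mul_inter_slab hx.le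
            (sqrt_le_one.2 (sub_le_self 1 (sq_nonneg (ρ + 2 * η))) : R ≤ 1) hη hdim]
      _ ≤ volume.real
            (((ρ + 2 * η) • x + ·) ⁻¹' ({y | x ∈ halfSpace y ρ} ∩ closedBall 0 (1 + η))) := by
          refine measureReal_mono ?_ ?_
          · rintro z ⟨hzR, hzx⟩
            have hz : ‖z‖ ≤ R := by simpa using hzR
            exact ⟨mem_halfSpace_smul_add hx hρ hη hρη hz hzx, mem_closedBall_zero_iff.2 <|
              norm_smul_add_le hx (by positivity) hρη hη hz (abs_le.1 hzx).2⟩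
          · rw [measure_preimage_add]
            exact measure_inter_ne_top_of_right_ne_top measure_closedBall_lt_top.ne
      _ = ν.real {y | x ∈ halfSpace y ρ} := by
          rw [measureReal_restrict_apply' measurableSet_closedBall, measureReal_def,
            measure_preimage_add, measureReal_def]
  have h := hm.le_measureReal_halfSpace_mul hp ρ (Measure.ae_ne ν 0) h_halfSpace
  rw [measureReal_restrict_apply_univ,
    Measure.addHaar_real_closedBall' volume 0 (by positivity), ← mul_assoc, ← mul_assoc] at h
  have h' := le_of_mul_le_mul_right h measureReal_closedBall_zero_one_pos
  rwa [div_pow, ← mul_div_assoc, div_le_iff₀ (by positivity)]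

lemma measureReal_halfSpace_le_two_mul_inter_slab {p z : E} (hp : p ≠ 0) (hpz : ⟪p, z⟫_ℝ = 0)
    (hz : ‖z‖ ≤ 1) (ρ : ℝ) {δ : ℝ} (hδ : 0 ≤ δ) (hdim : 2 ≤ ((finrank ℝ E : ℝ) - 1) * δ ^ 2) :
    m.real (halfSpace p ρ) ≤ 2 * m.real (halfSpace p ρ ∩ {x | |⟪x, z⟫_ℝ| ≤ δ}) := by
  have := hm.toIsProbabilityMeasure
  have h_inv (f : E ≃ₗᵢ[ℝ] E) (hf : ∀ x ∈ (ℝ ∙ p)ᗮᗮ, f x = x) :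
      MeasurePreserving f (m.restrict (halfSpace p ρ)) (m.restrict (halfSpace p ρ)) := by
    have hfp : f p = p := hf p <| Submodule.le_orthogonal_orthogonal _ <|
      Submodule.mem_span_singleton_self p
    have h_pre : f ⁻¹' halfSpace p ρ = halfSpace p ρ := by
      simpa only [hfp] using preimage_halfSpace f p ρ
    simpa only [h_pre] using
      (hm.measurePreserving f).restrict_preimage (measurableSet_halfSpace p ρ)
  have h_norm : ∀ᵐ x ∂m.restrict (halfSpace p ρ), ‖x‖ ≤ 1 :=
    ae_restrict_of_ae (hm.norm_eq_one.mono fun x hx ↦ hx.le)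
  have h_finrank : (finrank ℝ (ℝ ∙ p)ᗮ : ℝ) = finrank ℝ E - 1 := by
    rw [← (ℝ ∙ p).finrank_add_finrank_orthogonal, finrank_span_singleton hp]
    push_cast
    ring
  have h := measureReal_univ_le_two_mul_measureReal_slab h_inv h_norm
    (Submodule.mem_orthogonal_singleton_iff_inner_right.2 hpz) hz hδ (h_finrank ▸ hdim)
  rwa [measureReal_restrict_apply_univ, measureReal_restrict_apply' (measurableSet_halfSpace p ρ),
    Set.inter_comm] at h

lemma measureReal_halfSpace_le_two_mul_wedge {u w : E} (hu : ‖u‖ = 1) (hw : ‖w‖ = 1)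
    (huw : u + w ≠ 0) {b ρ ε : ℝ} (hε : 0 ≤ ε) (hb : ρ * ‖u + w‖ = 2 * b + 2 * ε)
    (hdim : 2 ≤ ((finrank ℝ E : ℝ) - 1) * ε ^ 2) :
    m.real (halfSpace (u + w) ρ) ≤ 2 * m.real (wedge u w b) := by
  have := hm.toIsProbabilityMeasure
  have h_orth : ⟪u + w, (2⁻¹ : ℝ) • (w - u)⟫_ℝ = 0 := by
    rw [real_inner_smul_right, add_comm,
      (real_inner_add_sub_eq_zero_iff w u).2 (hw.trans hu.symm), mul_zero]
  have h_norm : ‖(2⁻¹ : ℝ) • (w - u)‖ ≤ 1 := by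
    rw [norm_smul, norm_inv, norm_ofNat]
    linarith [norm_sub_le w u]
  refine (hm.measureReal_halfSpace_le_two_mul_inter_slab huw h_orth h_norm ρ hε hdim).trans ?_
  exact mul_le_mul_of_nonneg_left
    (measureReal_mono (halfSpace_add_inter_slab_subset_wedge u w hb)) zero_le_two

end IsUniformOnSphere

end Bounds

section Asymptotics

lemma tendsto_of_tendsto_of_eventually_le {ι κ α : Type*} [TopologicalSpace α] [LinearOrder α]
    [OrderTopology α] {l : Filter ι} {k : Filter κ} [k.NeBot] {f U : ι → α} {L : κ → ι → α}
    {g : κ → α} {a : α} (hU : Tendsto U l (𝓝 a)) (hfU : ∀ᶠ i in l, f i ≤ U i)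
    (hg : Tendsto g k (𝓝 a)) (hL : ∀ᶠ j in k, Tendsto (L j) l (𝓝 (g j)))
    (hLf : ∀ᶠ j in k, ∀ᶠ i in l, L j i ≤ f i) : Tendsto f l (𝓝 a) := by
  refine tendsto_order.2 ⟨fun c hc ↦ ?_, fun c hc ↦ ?_⟩
  · obtain ⟨j, hcj, hLj, hLfj⟩ := ((hg.eventually_const_lt hc).and (hL.and hLf)).exists
    filter_upwards [hLj.eventually_const_lt hcj, hLfj] with i hci hi using hci.trans_le hi
  · filter_upwards [hU.eventually_lt_const hc, hfU] with i hci hi using hi.trans_lt hci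

variable {ι : Type*} {l : Filter ι} {n : ι → ℕ}

lemma tendsto_const_mul_rpow_one_div (hn : Tendsto n l atTop) {K : ℝ} (hK : 0 < K) {f : ι → ℝ}
    (hf : ∀ i, 0 ≤ f i) {a : ℝ} (hfa : Tendsto (fun i ↦ f i ^ ((1 : ℝ) / n i)) l (𝓝 a)) :
    Tendsto (fun i ↦ (K * f i) ^ ((1 : ℝ) / n i)) l (𝓝 a) := by
  have hK_root : Tendsto (fun i ↦ K ^ ((1 : ℝ) / n i)) l (𝓝 1) := by
    simpa using tendsto_const_nhds.rpow (tendsto_one_div_atTop_nhds_zero_nat.comp hn)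
      (.inl hK.ne')
  simpa only [mul_rpow hK.le (hf _), one_mul] using hK_root.mul hfa

lemma tendsto_const_mul_pow_rpow_one_div (hn : Tendsto n l atTop) {K g : ℝ} (hK : 0 < K)
    (hg : 0 ≤ g) : Tendsto (fun i ↦ (K * g ^ n i) ^ ((1 : ℝ) / n i)) l (𝓝 g) := by
  refine tendsto_const_mul_rpow_one_div hn hK (fun i ↦ pow_nonneg hg _) ?_
  refine tendsto_const_nhds.congr' ?_
  filter_upwards [hn.eventually_ne_atTop 0] with i hi
  rw [one_div, pow_rpow_inv_natCast hg hi]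

lemma eventually_le_natCast_mul (hn : Tendsto n l atTop) (C : ℝ) {q : ℝ} (hq : 0 < q) :
    ∀ᶠ i in l, C ≤ n i * q :=
  ((tendsto_natCast_atTop_atTop.comp hn).atTop_mul_const hq).eventually_ge_atTop C

variable {E : ι → Type*} [∀ i, NormedAddCommGroup (E i)] [∀ i, InnerProductSpace ℝ (E i)]
  [∀ i, FiniteDimensional ℝ (E i)] [∀ i, MeasurableSpace (E i)] [∀ i, BorelSpace (E i)]
  {m : ∀ i, Measure (E i)}

lemma tendsto_measureReal_halfSpace_rpow (hn : Tendsto (fun i ↦ finrank ℝ (E i)) l atTop)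
    (hm : ∀ᶠ i in l, IsUniformOnSphere (m i)) {p : ∀ i, E i} (hp : ∀ᶠ i in l, p i ≠ 0)
    {ρ : ℝ} (hρ : 0 ≤ ρ) (hρ1 : ρ < 1) :
    Tendsto (fun i ↦ (m i).real (halfSpace (p i) ρ) ^ ((1 : ℝ) / finrank ℝ (E i))) l
      (𝓝 √(1 - ρ ^ 2)) := by
  have hpos : 0 < 1 - ρ ^ 2 := sub_pos.2 (pow_lt_one₀ hρ hρ1 two_ne_zero)
  have h_small : ∀ᶠ η : ℝ in 𝓝[>] 0, 0 < η ∧ ρ + 2 * η ≤ 1 := by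
    filter_upwards [Ioc_mem_nhdsGT (half_pos (sub_pos.2 hρ1))] with η hη
    exact ⟨hη.1, by linarith [hη.2]⟩
  have h_radius : Tendsto (fun η ↦ √(1 - (ρ + 2 * η) ^ 2) / (1 + η)) (𝓝[>] 0)
      (𝓝 √(1 - ρ ^ 2)) := by
    have : ContinuousAt (fun η ↦ √(1 - (ρ + 2 * η) ^ 2) / (1 + η)) 0 :=
      .div (by fun_prop) (by fun_prop) (by norm_num)
    simpa using this.tendsto.mono_left nhdsWithin_le_nhds
  refine tendsto_of_tendsto_of_eventually_le (k := 𝓝[>] (0 : ℝ))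
    (tendsto_const_mul_pow_rpow_one_div hn (inv_pos.2 hpos) (sqrt_nonneg _)) ?_ h_radius
    (h_small.mono fun η hη ↦ tendsto_const_mul_pow_rpow_one_div hn (by norm_num : (0 : ℝ) < 1 / 2)
      (div_nonneg (sqrt_nonneg _) (by linarith))) ?_
  · filter_upwards [hm, hp] with i hmi hpi
    gcongr
    exact hmi.measureReal_halfSpace_le hpi hρ hρ1
  · filter_upwards [h_small] with η ⟨hη, hρη⟩
    filter_upwards [hm, hp, eventually_le_natCast_mul hn 2 (pow_pos hη 2)] with i hmi hpi hdim
    gcongr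
    exact hmi.le_measureReal_halfSpace hpi hρ hη.le hρη hdim

lemma tendsto_measureReal_wedge_rpow (hn : Tendsto (fun i ↦ finrank ℝ (E i)) l atTop)
    (hm : ∀ᶠ i in l, IsUniformOnSphere (m i)) {u w : ∀ i, E i}
    (huw : ∀ᶠ i in l, ‖u i‖ = 1 ∧ ‖w i‖ = 1) {ρ c : ℝ} (hc : 0 < c)
    (huwc : ∀ᶠ i in l, ‖u i + w i‖ = 2 * c) (hρ : 0 ≤ ρ) (hρ1 : ρ < 1) :
    Tendsto (fun i ↦ (m i).real (wedge (u i) (w i) (ρ * c)) ^ ((1 : ℝ) / finrank ℝ (E i))) l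
      (𝓝 √(1 - ρ ^ 2)) := by
  have h_ne : ∀ᶠ i in l, u i + w i ≠ 0 := huwc.mono fun i hi ↦
    norm_ne_zero_iff.1 (by rw [hi]; positivity)
  have h_small : ∀ᶠ τ : ℝ in 𝓝[>] 0, 0 < τ ∧ ρ + τ < 1 := by
    filter_upwards [Ioo_mem_nhdsGT (sub_pos.2 hρ1)] with τ hτ
    exact ⟨hτ.1, by linarith [hτ.2]⟩
  have h_radius : Tendsto (fun τ ↦ √(1 - (ρ + τ) ^ 2)) (𝓝[>] 0) (𝓝 √(1 - ρ ^ 2)) := by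
    have : Continuous fun τ ↦ √(1 - (ρ + τ) ^ 2) := by fun_prop
    simpa using (this.tendsto 0).mono_left nhdsWithin_le_nhds
  refine tendsto_of_tendsto_of_eventually_le (k := 𝓝[>] (0 : ℝ))
    (tendsto_measureReal_halfSpace_rpow hn hm h_ne hρ hρ1) ?_ h_radius
    (h_small.mono fun τ ⟨hτ, hρτ⟩ ↦ tendsto_const_mul_rpow_one_div hn
      (by norm_num : (0 : ℝ) < 1 / 2) (fun _ ↦ measureReal_nonneg)
      (tendsto_measureReal_halfSpace_rpow hn hm h_ne (by positivity) hρτ)) ?_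
  · filter_upwards [hm, huwc] with i hmi hi
    have := hmi.toIsProbabilityMeasure
    have h_sub : wedge (u i) (w i) (ρ * c) ⊆ halfSpace (u i + w i) ρ :=
      wedge_subset_halfSpace_add _ _ (by rw [hi]; ring)
    exact rpow_le_rpow measureReal_nonneg (measureReal_mono h_sub) (by positivity)
  · filter_upwards [h_small] with τ ⟨hτ, _⟩
    have hτc : 0 < τ * c := mul_pos hτ hc
    filter_upwards [hm, huw, huwc, h_ne,
      eventually_le_natCast_mul hn (2 + (τ * c) ^ 2) (pow_pos hτc 2)]
      with i hmi ⟨hu, hw⟩ hi hne hdim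
    have h_half := hmi.measureReal_halfSpace_le_two_mul_wedge (b := ρ * c) (ρ := ρ + τ) hu hw
      hne hτc.le (by rw [hi]; ring) (by linarith)
    gcongr
    linarith

theorem stmt_11_general (hn : Tendsto (fun i ↦ finrank ℝ (E i)) l atTop)
    (hm : ∀ᶠ i in l, IsUniformOnSphere (m i)) {u w : ∀ i, E i} {b t : ℝ} (hb : 0 ≤ b)
    (hbt : 2 * b ^ 2 < 1 + t)
    (huw : ∀ᶠ i in l, ‖u i‖ = 1 ∧ ‖w i‖ = 1 ∧ ⟪u i, w i⟫_ℝ = t) :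
    Tendsto (fun i ↦ (m i).real (wedge (u i) (w i) b) ^ ((1 : ℝ) / finrank ℝ (E i))) l
      (𝓝 √(1 - 2 * b ^ 2 / (1 + t))) := by
  have ht : 0 < 1 + t := (by positivity : 0 ≤ 2 * b ^ 2).trans_lt hbt
  set c := √((1 + t) / 2)
  have hc : 0 < c := sqrt_pos.2 (by positivity)
  have hc_sq : c ^ 2 = (1 + t) / 2 := sq_sqrt (by positivity)
  have h_norm : ∀ᶠ i in l, ‖u i + w i‖ = 2 * c := by
    filter_upwards [huw] with i ⟨hu, hw, hi⟩
    rw [← sq_eq_sq₀ (norm_nonneg _) (by positivity), norm_add_sq_real, hu, hw, hi, mul_pow, hc_sq]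
    ring
  have hρ_sq : (b / c) ^ 2 = 2 * b ^ 2 / (1 + t) := by
    rw [div_pow, hc_sq]
    field_simp
  have hρ1 : b / c < 1 := by
    rw [← sq_lt_one_iff₀ (by positivity), hρ_sq]
    exact (div_lt_one ht).2 hbt
  simpa only [hρ_sq, div_mul_cancel₀ b hc.ne'] using tendsto_measureReal_wedge_rpow hn hm
    (huw.mono fun i hi ↦ ⟨hi.1, hi.2.1⟩) hc h_norm (by positivity) hρ1

end Asymptotics

lemma norm_cos_smul_add_sin_smul {E : Type*} [NormedAddCommGroup E] [InnerProductSpace ℝ E]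
    {e₀ e₁ : E} (h₀ : ‖e₀‖ = 1) (h₁ : ‖e₁‖ = 1) (h₀₁ : ⟪e₀, e₁⟫_ℝ = 0) (θ : ℝ) :
    ‖cos θ • e₀ + sin θ • e₁‖ = 1 := by
  have h_orth : ⟪cos θ • e₀, sin θ • e₁⟫_ℝ = 0 := by
    rw [real_inner_smul_left, real_inner_smul_right, h₀₁, mul_zero, mul_zero]
  rw [← sq_eq_sq₀ (norm_nonneg _) zero_le_one, norm_add_sq_real, h_orth, norm_smul, norm_smul, h₀,
    h₁]
  simp

lemma inner_cos_smul_add_sin_smul {E : Type*} [NormedAddCommGroup E] [InnerProductSpace ℝ E]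
    {e₀ e₁ : E} (h₀ : ‖e₀‖ = 1) (h₀₁ : ⟪e₀, e₁⟫_ℝ = 0) (θ : ℝ) :
    ⟪e₀, cos θ • e₀ + sin θ • e₁⟫_ℝ = cos θ := by
  rw [inner_add_right, real_inner_smul_right, real_inner_smul_right, h₀₁,
    real_inner_self_eq_norm_sq, h₀]
  ring

/-- Asymptotic form of the wedge-volume formula
`W_d(α, θ) = poly(d) · (1 - 2 cos²α/(1 + cos θ))^{d/2}`: for fixed `α ∈ (0, π/2)` and
`θ ∈ (0, π)` with `2 cos²α < 1 + cos θ`, if for each `d ≥ 2` the measure `μ d` is the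
rotation-invariant probability measure on the unit sphere of `ℝ^d`, `e₀ d, e₁ d` are
orthonormal, `u = e₀` and `w = cos θ • e₀ + sin θ • e₁` (so that `θ(u, w) = θ`), then the
relative volume `W_d(α, θ)` of the wedge `H_{u,α} ∩ H_{w,α}` satisfies
`W_d(α, θ)^(1/d) → (1 - 2 cos²α/(1 + cos θ))^{1/2}` as `d → ∞`. -/
theorem stmt_11 (α θ : ℝ) (hα : α ∈ Set.Ioo 0 (π / 2)) (hθ : θ ∈ Set.Ioo 0 π)
    (hcond : 2 * cos α ^ 2 < 1 + cos θ)
    (μ : ∀ d : ℕ, Measure (Metric.sphere (0 : EuclideanSpace ℝ (Fin d)) 1))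
    (hprob : ∀ d, 2 ≤ d → IsProbabilityMeasure (μ d))
    (hrot : ∀ d, 2 ≤ d →
      ∀ f : EuclideanSpace ℝ (Fin d) ≃ₗᵢ[ℝ] EuclideanSpace ℝ (Fin d),
      ∀ A : Set (EuclideanSpace ℝ (Fin d)), MeasurableSet A →
        μ d {x | (x : EuclideanSpace ℝ (Fin d)) ∈ A} =
          μ d {x | f (x : EuclideanSpace ℝ (Fin d)) ∈ A})
    (e₀ e₁ : ∀ d : ℕ, EuclideanSpace ℝ (Fin d))
    (he : ∀ d, 2 ≤ d → ‖e₀ d‖ = 1 ∧ ‖e₁ d‖ = 1 ∧ ⟪e₀ d, e₁ d⟫_ℝ = 0)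
    (w : ∀ d : ℕ, EuclideanSpace ℝ (Fin d))
    (hw : ∀ d, w d = cos θ • e₀ d + sin θ • e₁ d) :
    Tendsto (fun d : ℕ =>
        ((μ d) {x | cos α ≤ ⟪(x : EuclideanSpace ℝ (Fin d)), e₀ d⟫_ℝ ∧
            cos α ≤ ⟪(x : EuclideanSpace ℝ (Fin d)), w d⟫_ℝ}).toReal ^ ((1 : ℝ) / d))
      atTop (nhds (Real.sqrt (1 - 2 * cos α ^ 2 / (1 + cos θ)))) := by
  have hm : ∀ᶠ d : ℕ in atTop, IsUniformOnSphere ((μ d).map Subtype.val) := by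
    filter_upwards [eventually_ge_atTop 2] with d hd
    exact isUniformOnSphere_map_coe (hprob d hd) (hrot d hd)
  have huw : ∀ᶠ d : ℕ in atTop, ‖e₀ d‖ = 1 ∧ ‖w d‖ = 1 ∧ ⟪e₀ d, w d⟫_ℝ = cos θ := by
    filter_upwards [eventually_ge_atTop 2] with d hd
    obtain ⟨h₀, h₁, h₀₁⟩ := he d hd
    rw [hw]
    exact ⟨h₀, norm_cos_smul_add_sin_smul h₀ h₁ h₀₁ θ, inner_cos_smul_add_sin_smul h₀ h₀₁ θ⟩
  have hn : Tendsto (fun d : ℕ ↦ finrank ℝ (EuclideanSpace ℝ (Fin d))) atTop atTop := by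
    simp only [finrank_euclideanSpace_fin]
    exact tendsto_id
  have hα_cos : 0 ≤ cos α := cos_nonneg_of_mem_Icc ⟨by linarith [hα.1, pi_pos], hα.2.le⟩
  have h := stmt_11_general hn hm hα_cos hcond huw
  simp only [finrank_euclideanSpace_fin, measureReal_map_sphere_coe] at h
  exact h
end
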